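/- For every ν ∈ (0,1), the relaxation response of the fractional modified Maxwell model, σ(t) = E_ν(−(log(1+t))^ν), is completely monotone on (0,∞): σ is infinitely differentiable on (0,∞) and for every integer n ≥ 0 and every t > 0, (−1)^n · (dⁿσ/dtⁿ)(t) ≥ 0. -/

import Mathlib

open Real Set

/-- The Mittag-Leffler function `E_ν(x) = ∑_{k=0}^∞ x^k / Γ(νk+1)`. -/
noncomputable def mittagLeffler (ν x : ℝ) : ℝ :=
  ∑' k : ℕ, x ^ k / Real.Gamma (ν * k + 1)

open MeasureTheory ProbabilityTheory Filter Topology Polynomial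
open scoped ContDiff

/-! For `0 < ν < 1` the function `t ↦ E_ν(-t^ν)` has Laplace transform `p^(ν-1) / (p^ν + 1)`. In the
coordinate `p = exp w` the function `p^ν / (p^ν + 1)` is holomorphic on the strip `|Im w| ≤ π`, and
Cauchy's theorem on long rectangles in that strip exhibits `p^(ν-1) / (p^ν + 1)` as the Stieltjes
transform of the jump of `p^ν / (p^ν + 1)` across the negative half-line. The jump is a positive
density, so by uniqueness of Laplace transforms `E_ν(-t^ν)` is itself the Laplace transform of a
positive measure, hence completely monotone. Complete monotonicity survives composition with
`t ↦ log (1 + t)`, a positive function with completely monotone derivative. -/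

/-- Complete monotonicity on `(0, ∞)`; nothing is asked of `f` on `(-∞, 0]`. -/
def CompletelyMonotone (f : ℝ → ℝ) : Prop :=
  ContDiffOn ℝ ∞ f (Ioi 0) ∧ ∀ n : ℕ, ∀ t : ℝ, 0 < t → 0 ≤ (-1) ^ n * iteratedDeriv n f t

namespace CompletelyMonotone

variable {f g : ℝ → ℝ}

lemma congr (hf : CompletelyMonotone f) (hfg : EqOn g f (Ioi 0)) : CompletelyMonotone g := by
  refine ⟨hf.1.congr hfg, fun n t ht => ?_⟩
  rw [hfg.iteratedDeriv_of_isOpen isOpen_Ioi n ht]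
  exact hf.2 n t ht

lemma neg_deriv (hf : CompletelyMonotone f) : CompletelyMonotone (-deriv f) := by
  refine ⟨(hf.1.deriv_of_isOpen isOpen_Ioi le_rfl).neg, fun n t ht => ?_⟩
  rw [iteratedDeriv_neg, ← iteratedDeriv_succ']
  simpa [pow_succ] using hf.2 (n + 1) t ht

lemma contDiffAt (hf : CompletelyMonotone f) (n : ℕ) {t : ℝ} (ht : 0 < t) :
    ContDiffAt ℝ n f t :=
  (hf.1.contDiffAt (Ioi_mem_nhds ht)).of_le (mod_cast le_top)

lemma hasDerivAt (hf : CompletelyMonotone f) {t : ℝ} (ht : 0 < t) :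
    HasDerivAt f (deriv f t) t :=
  ((hf.contDiffAt 1 ht).differentiableAt one_ne_zero).hasDerivAt

lemma eqOn_deriv_comp (hf : CompletelyMonotone f) (hg : ContDiffOn ℝ ∞ g (Ioi 0))
    (hmaps : MapsTo g (Ioi 0) (Ioi 0)) :
    EqOn (deriv (f ∘ g)) (-((-deriv f ∘ g) * deriv g)) (Ioi 0) := fun t ht => by
  have hgt : DifferentiableAt ℝ g t :=
    (hg.contDiffAt (Ioi_mem_nhds ht)).differentiableAt (by simp)
  simpa using ((hf.hasDerivAt (hmaps ht)).comp t hgt.hasDerivAt).deriv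

/-- The induction works because `(f ∘ g)' = -((-f') ∘ g) * g'` where `-f'` is again completely
monotone, so Leibniz' rule only involves derivatives of `(-f') ∘ g` of lower order. -/
lemma neg_one_pow_mul_iteratedDeriv_comp_nonneg (hg : ContDiffOn ℝ ∞ g (Ioi 0))
    (hmaps : MapsTo g (Ioi 0) (Ioi 0)) (hg' : CompletelyMonotone (deriv g)) (n : ℕ)
    {f : ℝ → ℝ} (hf : CompletelyMonotone f) {t : ℝ} (ht : 0 < t) :
    0 ≤ (-1) ^ n * iteratedDeriv n (f ∘ g) t := by
  induction n using Nat.strong_induction_on generalizing f with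
  | _ n ih =>
    obtain _ | n := n
    · simpa using hf.2 0 (g t) (hmaps ht)
    have hcomp : ContDiffAt ℝ n (-deriv f ∘ g) t :=
      (hf.neg_deriv.contDiffAt n (hmaps ht)).comp t
        ((hg.contDiffAt (Ioi_mem_nhds ht)).of_le (mod_cast le_top))
    rw [iteratedDeriv_succ',
      (hf.eqOn_deriv_comp hg hmaps).iteratedDeriv_of_isOpen isOpen_Ioi n ht, iteratedDeriv_neg,
      iteratedDeriv_mul hcomp (hg'.contDiffAt n ht), pow_succ, mul_neg_one, neg_mul_neg,
      Finset.mul_sum]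
    refine Finset.sum_nonneg fun i hi => ?_
    have hin : i ≤ n := Nat.lt_succ_iff.mp (Finset.mem_range.mp hi)
    calc (0 : ℝ) ≤ n.choose i * ((-1) ^ i * iteratedDeriv i (-deriv f ∘ g) t) *
          ((-1) ^ (n - i) * iteratedDeriv (n - i) (deriv g) t) :=
        mul_nonneg (mul_nonneg (by positivity) (ih i (by lia) hf.neg_deriv)) (hg'.2 _ t ht)
      _ = (-1) ^ n * (n.choose i * iteratedDeriv i (-deriv f ∘ g) t *
          iteratedDeriv (n - i) (deriv g) t) := by
        rw [← Nat.add_sub_cancel' hin, pow_add, Nat.add_sub_cancel' hin]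
        ring

lemma comp (hf : CompletelyMonotone f) (hg : ContDiffOn ℝ ∞ g (Ioi 0))
    (hmaps : MapsTo g (Ioi 0) (Ioi 0)) (hg' : CompletelyMonotone (deriv g)) :
    CompletelyMonotone (f ∘ g) :=
  ⟨hf.1.comp hg hmaps,
    fun n _ ht => neg_one_pow_mul_iteratedDeriv_comp_nonneg hg hmaps hg' n hf ht⟩

end CompletelyMonotone

lemma completelyMonotone_inv_const_add {c : ℝ} (hc : 0 ≤ c) :
    CompletelyMonotone fun t => (c + t)⁻¹ := by
  refine ⟨(contDiffOn_const.add contDiffOn_id).inv fun t ht => (add_pos_of_nonneg_of_pos hc ht).ne',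
    fun n t ht => ?_⟩
  have hct : 0 < c + t := add_pos_of_nonneg_of_pos hc ht
  have hderiv : iteratedDeriv n (fun t => (c + t)⁻¹) t =
      (-1) ^ n * (n.factorial * (c + t) ^ (-1 - n : ℤ)) := by
    rw [iteratedDeriv_comp_const_add n Inv.inv, iteratedDeriv_eq_iterate, iter_deriv_inv']
    exact mul_assoc _ _ _
  rw [hderiv, ← mul_assoc, ← mul_pow, neg_one_mul, neg_neg, one_pow, one_mul]
  positivity

lemma completelyMonotone_deriv_log_const_add {c : ℝ} (hc : 0 ≤ c) :
    CompletelyMonotone (deriv fun t => log (c + t)) :=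
  (completelyMonotone_inv_const_add hc).congr fun t ht => by
    have hne : c + t ≠ 0 := (add_pos_of_nonneg_of_pos hc ht).ne'
    simpa using (((hasDerivAt_id t).const_add c).log hne).deriv

lemma completelyMonotone_mgf {Ω : Type*} {m : MeasurableSpace Ω} {μ : Measure Ω} {X : Ω → ℝ}
    (hX : X ≤ᵐ[μ] 0) (hint : Ioi 0 ⊆ integrableExpSet X μ) : CompletelyMonotone (mgf X μ) := by
  have hsub : Ioi 0 ⊆ interior (integrableExpSet X μ) := interior_maximal hint isOpen_Ioi
  refine ⟨(analyticOnNhd_mgf.mono hsub).contDiffOn (uniqueDiffOn_Ioi 0), fun n t ht => ?_⟩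
  rw [iteratedDeriv_mgf (hsub ht), ← integral_const_mul]
  refine integral_nonneg_of_ae (hX.mono fun x hx => ?_)
  calc (0 : ℝ) ≤ (-X x) ^ n * exp (t * X x) :=
        mul_nonneg (pow_nonneg (neg_nonneg.mpr hx) n) (exp_nonneg _)
    _ = (-1) ^ n * (X x ^ n * exp (t * X x)) := by rw [← mul_assoc, ← mul_pow, neg_one_mul]

section LaplaceUniqueness

variable {E : Type*} [NormedAddCommGroup E] [NormedSpace ℝ E]

section Moments

variable {α : Type*} {m : MeasurableSpace α} {μ : Measure α} {X : α → ℝ} {F : α → E} {a b : ℝ}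

lemma integrable_continuous_comp_smul {φ : ℝ → ℝ} (hφ : Continuous φ) (hX : AEMeasurable X μ)
    (hXab : ∀ᵐ x ∂μ, X x ∈ Icc a b) (hF : Integrable F μ) :
    Integrable (fun x => φ (X x) • F x) μ := by
  obtain ⟨C, hC⟩ := isCompact_Icc.exists_bound_of_continuousOn (s := Icc a b) hφ.continuousOn
  exact hF.bdd_smul C (hφ.measurable.comp_aemeasurable hX).aestronglyMeasurable
    (hXab.mono fun x hx => hC _ hx)

lemma integral_polynomial_eval_smul_eq_zero (hX : AEMeasurable X μ)
    (hXab : ∀ᵐ x ∂μ, X x ∈ Icc a b) (hF : Integrable F μ)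
    (hmoment : ∀ n : ℕ, ∫ x, X x ^ n • F x ∂μ = 0) (p : ℝ[X]) :
    ∫ x, p.eval (X x) • F x ∂μ = 0 := by
  simp only [eval_eq_sum_range, Finset.sum_smul, mul_smul]
  rw [integral_finsetSum]
  · exact Finset.sum_eq_zero fun n _ => by rw [integral_smul, hmoment, smul_zero]
  · exact fun n _ =>
      (integrable_continuous_comp_smul (continuous_pow n) hX hXab hF).smul (p.coeff n)

lemma integral_comp_smul_eq_zero_of_moments (hX : AEMeasurable X μ)
    (hXab : ∀ᵐ x ∂μ, X x ∈ Icc a b) (hF : Integrable F μ)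
    (hmoment : ∀ n : ℕ, ∫ x, X x ^ n • F x ∂μ = 0) {φ : ℝ → ℝ} (hφ : Continuous φ) :
    ∫ x, φ (X x) • F x ∂μ = 0 := by
  have hbound : ∀ ε > 0, ‖∫ x, φ (X x) • F x ∂μ‖ ≤ ε * ∫ x, ‖F x‖ ∂μ := fun ε hε => by
    obtain ⟨p, hp⟩ := exists_polynomial_near_of_continuousOn a b φ hφ.continuousOn ε hε
    have hsub : ∫ x, φ (X x) • F x ∂μ = ∫ x, (φ (X x) - p.eval (X x)) • F x ∂μ := by
      simp only [sub_smul]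
      rw [integral_sub (integrable_continuous_comp_smul hφ hX hXab hF)
        (integrable_continuous_comp_smul p.continuous hX hXab hF),
        integral_polynomial_eval_smul_eq_zero hX hXab hF hmoment, sub_zero]
    rw [hsub, ← integral_const_mul]
    refine norm_integral_le_of_norm_le (hF.norm.const_mul ε) (hXab.mono fun x hx => ?_)
    rw [norm_smul, norm_sub_rev]
    exact mul_le_mul_of_nonneg_right (hp _ hx).le (norm_nonneg _)
  have hlim : Tendsto (fun ε => ε * ∫ x, ‖F x‖ ∂μ) (𝓝[>] 0) (𝓝 0) := by
    simpa using (tendsto_id.mul_const (∫ x, ‖F x‖ ∂μ)).mono_left (nhdsWithin_le_nhds (a := (0 : ℝ)))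
  exact norm_le_zero_iff.mp (ge_of_tendsto hlim (eventually_mem_nhdsWithin.mono hbound))

end Moments

lemma continuous_comp_neg_log {φ : ℝ → ℝ} (hφ : Continuous φ) (hsupp : HasCompactSupport φ)
    (h0 : φ 0 = 0) : Continuous fun u => φ (-log u) := by
  refine continuous_iff_continuousAt.mpr fun u => ?_
  obtain rfl | hu := eq_or_ne u 0
  · rw [continuousAt_iff_punctured_nhds, log_zero, neg_zero, h0]
    exact (hsupp.is_zero_at_infty.mono_left atTop_le_cocompact).comp
      (tendsto_neg_atBot_atTop.comp tendsto_log_nhdsNE_zero)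
  · exact hφ.continuousAt.comp (continuousAt_log hu).neg

/-- After the substitution `u = exp (-t)` this is the injectivity of moments on `[0, 1]`. -/
theorem ae_eq_zero_of_forall_integral_exp_neg_smul_eq_zero [CompleteSpace E] {f : ℝ → E} {c : ℝ}
    (hf : IntegrableOn (fun t => exp (-(c * t)) • f t) (Ioi 0))
    (hlaplace : ∀ n : ℕ, ∫ t in Ioi 0, exp (-((c + n) * t)) • f t = 0) :
    f =ᵐ[volume.restrict (Ioi 0)] 0 := by
  have hmoment (n : ℕ) : ∫ t in Ioi 0, exp (-t) ^ n • exp (-(c * t)) • f t = 0 := by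
    rw [← hlaplace n]
    congr with t
    rw [smul_smul, ← exp_nat_mul, ← exp_add]
    ring_nf
  have hunit : ∀ᵐ t ∂volume.restrict (Ioi 0), exp (-t) ∈ Icc 0 1 := by
    filter_upwards [ae_restrict_mem measurableSet_Ioi] with t ht
    exact ⟨(exp_pos _).le, exp_le_one_iff.mpr (neg_nonpos.mpr ht.le)⟩
  have htest (g : ℝ → ℝ) (hg : ContDiff ℝ ∞ g) (hsupp : HasCompactSupport g)
      (hsub : tsupport g ⊆ Ioi 0) : ∫ t in Ioi 0, g t • exp (-(c * t)) • f t = 0 := by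
    have h0 : g 0 = 0 := image_eq_zero_of_notMem_tsupport fun h => self_notMem_Ioi (hsub h)
    simpa using integral_comp_smul_eq_zero_of_moments (by fun_prop) hunit hf hmoment
      (continuous_comp_neg_log hg.continuous hsupp h0)
  have hzero := isOpen_Ioi.ae_eq_zero_of_integral_contDiff_smul_eq_zero
    (hf.locallyIntegrable.locallyIntegrableOn _) htest
  filter_upwards [hzero, ae_restrict_mem measurableSet_Ioi] with t ht hmem
  exact (smul_eq_zero.mp (ht hmem)).resolve_left (exp_pos _).ne'

theorem eqOn_Ioi_of_integral_exp_neg_smul_eq [CompleteSpace E] {f g : ℝ → E} {c : ℝ}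
    (hf : ContinuousOn f (Ioi 0)) (hg : ContinuousOn g (Ioi 0))
    (hfint : ∀ p, c < p → IntegrableOn (fun t => exp (-(p * t)) • f t) (Ioi 0))
    (hgint : ∀ p, c < p → IntegrableOn (fun t => exp (-(p * t)) • g t) (Ioi 0))
    (heq : ∀ p, c < p →
      ∫ t in Ioi 0, exp (-(p * t)) • f t = ∫ t in Ioi 0, exp (-(p * t)) • g t) :
    EqOn f g (Ioi 0) := by
  have hsub (p : ℝ) : (fun t => exp (-(p * t)) • (f - g) t) =
      (fun t => exp (-(p * t)) • f t) - fun t => exp (-(p * t)) • g t :=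
    funext fun t => smul_sub _ _ _
  have hc : c < c + 1 := lt_add_one c
  have hzero : f - g =ᵐ[volume.restrict (Ioi 0)] 0 := by
    refine ae_eq_zero_of_forall_integral_exp_neg_smul_eq_zero (c := c + 1) ?_ fun n => ?_
    · rw [hsub]
      exact (hfint _ hc).sub (hgint _ hc)
    · have hcn : c < c + 1 + n := hc.trans_le (le_add_of_nonneg_right n.cast_nonneg)
      rw [hsub, integral_sub' (hfint _ hcn) (hgint _ hcn), heq _ hcn, sub_self]
  exact Measure.eqOn_open_of_ae_eq (hzero.mono fun t => sub_eq_zero.mp) isOpen_Ioi hf hg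

end LaplaceUniqueness

section MittagLeffler

variable {ν p z : ℝ}

lemma rpow_mul_exp_neg_le_Gamma_add_one {a s : ℝ} (ha : 0 < a) (hs : 0 ≤ s) :
    a ^ s * exp (-a) ≤ Gamma (s + 1) := by
  have hint : IntegrableOn (fun x => exp (-x) * x ^ s) (Ioi 0) := by
    simpa using GammaIntegral_convergent (s := s + 1) (by linarith)
  have hsub : Ioi a ⊆ Ioi 0 := Ioi_subset_Ioi ha.le
  calc a ^ s * exp (-a) = ∫ x in Ioi a, exp (-x) * a ^ s := by
        rw [integral_mul_const, integral_exp_neg_Ioi, mul_comm]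
    _ ≤ ∫ x in Ioi a, exp (-x) * x ^ s := by
        refine setIntegral_mono_on ((integrableOn_exp_neg_Ioi a).mul_const _)
          (hint.mono_set hsub) measurableSet_Ioi fun x hx => ?_
        have hax : a ≤ x := hx.le
        gcongr
    _ ≤ ∫ x in Ioi 0, exp (-x) * x ^ s :=
        setIntegral_mono_set hint ((ae_restrict_mem measurableSet_Ioi).mono fun x hx =>
          mul_nonneg (exp_nonneg _) (rpow_nonneg hx.le s)) hsub.eventuallyLE
    _ = Gamma (s + 1) := by rw [Gamma_eq_integral (by linarith), add_sub_cancel_right]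

lemma Gamma_mul_natCast_add_one_pos (hν : 0 ≤ ν) (k : ℕ) : 0 < Gamma (ν * k + 1) :=
  Gamma_pos_of_pos (by positivity)

lemma norm_pow_div_Gamma (hν : 0 ≤ ν) (x : ℝ) (k : ℕ) :
    ‖x ^ k / Gamma (ν * k + 1)‖ = |x| ^ k / Gamma (ν * k + 1) := by
  rw [norm_div, norm_pow, norm_eq_abs, norm_of_nonneg (Gamma_mul_natCast_add_one_pos hν k).le]

lemma summable_mittagLeffler (hν : 0 < ν) (x : ℝ) :
    Summable fun k : ℕ => x ^ k / Gamma (ν * k + 1) := by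
  set a : ℝ := (|x| + 1) ^ ν⁻¹
  have ha : 0 < a := by positivity
  have haν : a ^ ν = |x| + 1 := rpow_inv_rpow (by positivity) hν.ne'
  have hratio : |x| / (|x| + 1) < 1 := (div_lt_one (by positivity)).mpr (lt_add_one _)
  refine .of_norm_bounded ((summable_geometric_of_lt_one (by positivity) hratio).mul_left (exp a))
    fun k => ?_
  have hΓ : (|x| + 1) ^ k * exp (-a) ≤ Gamma (ν * k + 1) := by
    simpa [rpow_mul ha.le, haν] using
      rpow_mul_exp_neg_le_Gamma_add_one ha (s := ν * k) (by positivity)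
  rw [norm_pow_div_Gamma hν.le]
  calc |x| ^ k / Gamma (ν * k + 1) ≤ |x| ^ k / ((|x| + 1) ^ k * exp (-a)) := by gcongr
    _ = exp a * (|x| / (|x| + 1)) ^ k := by rw [exp_neg, div_pow]; field_simp

lemma continuous_mittagLeffler (hν : 0 < ν) : Continuous (mittagLeffler ν) := by
  refine continuous_iff_continuousAt.mpr fun x => ?_
  refine (continuousOn_tsum (s := Metric.closedBall 0 (|x| + 1)) (fun k => by fun_prop)
    (summable_mittagLeffler hν (|x| + 1)) fun k y hy => ?_).continuousAt
    (Metric.closedBall_mem_nhds_of_mem (by simp))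
  rw [norm_pow_div_Gamma hν.le]
  have hΓ := Gamma_mul_natCast_add_one_pos hν.le k
  have hyx : |y| ≤ |x| + 1 := by simpa using hy
  gcongr

lemma abs_mittagLeffler_le (hν : 0 < ν) (x : ℝ) : |mittagLeffler ν x| ≤ mittagLeffler ν |x| := by
  have hsum := summable_mittagLeffler hν |x|
  simp only [← norm_pow_div_Gamma hν.le] at hsum
  simpa only [norm_pow_div_Gamma hν.le, norm_eq_abs, mittagLeffler] using
    norm_tsum_le_tsum_norm hsum

lemma exp_neg_mul_pow_div_Gamma_eq {t : ℝ} (ht : 0 < t) (k : ℕ) :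
    exp (-(p * t)) * ((z * t ^ ν) ^ k / Gamma (ν * k + 1)) =
      z ^ k / Gamma (ν * k + 1) * (t ^ (ν * k + 1 - 1) * exp (-(p * t))) := by
  rw [add_sub_cancel_right, mul_pow, rpow_mul ht.le, rpow_natCast]
  ring

lemma integral_exp_neg_mul_pow_div_Gamma (hν : 0 ≤ ν) (hp : 0 < p) (z : ℝ) (k : ℕ) :
    ∫ t in Ioi 0, exp (-(p * t)) * ((z * t ^ ν) ^ k / Gamma (ν * k + 1)) =
      p⁻¹ * (z / p ^ ν) ^ k := by
  have hΓ := (Gamma_mul_natCast_add_one_pos hν k).ne'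
  rw [setIntegral_congr_fun measurableSet_Ioi fun t ht => exp_neg_mul_pow_div_Gamma_eq ht k,
    integral_const_mul, integral_rpow_mul_exp_neg_mul_Ioi (by positivity) hp, one_div,
    inv_rpow hp.le, rpow_add hp, rpow_mul hp.le, rpow_natCast, rpow_one, div_pow]
  field_simp

lemma integrableOn_exp_neg_mul_pow_div_Gamma (hν : 0 ≤ ν) (hp : 0 < p) (z : ℝ) (k : ℕ) :
    IntegrableOn (fun t => exp (-(p * t)) * ((z * t ^ ν) ^ k / Gamma (ν * k + 1))) (Ioi 0) := by
  have hbase : IntegrableOn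
      (fun t => exp (-(p * t)) * ((1 * t ^ ν) ^ k / Gamma (ν * k + 1))) (Ioi 0) := by
    refine .of_integral_ne_zero ?_
    rw [integral_exp_neg_mul_pow_div_Gamma hν hp]
    positivity
  refine (hbase.const_mul (z ^ k)).congr (.of_forall fun t => ?_)
  simp only [mul_pow, one_pow]
  ring

theorem integral_exp_neg_mul_mittagLeffler (hν : 0 ≤ ν) (hp : 0 < p) (hz : |z| < p ^ ν) :
    ∫ t in Ioi 0, exp (-(p * t)) * mittagLeffler ν (z * t ^ ν) = p ^ (ν - 1) / (p ^ ν - z) := by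
  have hpν : 0 < p ^ ν := rpow_pos_of_pos hp ν
  have hratio : |z| / p ^ ν < 1 := (div_lt_one hpν).mpr hz
  have hnorm (k : ℕ) : ∫ t in Ioi 0, ‖exp (-(p * t)) * ((z * t ^ ν) ^ k / Gamma (ν * k + 1))‖ =
      p⁻¹ * (|z| / p ^ ν) ^ k := by
    rw [← integral_exp_neg_mul_pow_div_Gamma hν hp]
    refine setIntegral_congr_fun measurableSet_Ioi fun t ht => ?_
    simp only [norm_mul, norm_pow_div_Gamma hν, abs_mul, norm_of_nonneg (exp_nonneg _),
      abs_of_pos (rpow_pos_of_pos ht ν)]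
  have hseries := hasSum_integral_of_summable_integral_norm
    (integrableOn_exp_neg_mul_pow_div_Gamma hν hp z)
    (by simpa only [hnorm] using (summable_geometric_of_lt_one (by positivity) hratio).mul_left _)
  simp only [integral_exp_neg_mul_pow_div_Gamma hν hp, tsum_mul_left] at hseries
  have hgeometric : HasSum (fun k : ℕ => p⁻¹ * (z / p ^ ν) ^ k) (p⁻¹ * (1 - z / p ^ ν)⁻¹) :=
    (hasSum_geometric_of_abs_lt_one (by rwa [abs_div, abs_of_pos hpν])).mul_left _
  calc ∫ t in Ioi 0, exp (-(p * t)) * mittagLeffler ν (z * t ^ ν)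
      = p⁻¹ * (1 - z / p ^ ν)⁻¹ := hseries.unique hgeometric
    _ = p ^ (ν - 1) / (p ^ ν - z) := by
        have hpz : p ^ ν - z ≠ 0 := (sub_pos.mpr ((le_abs_self z).trans_lt hz)).ne'
        rw [rpow_sub_one hp.ne', one_sub_div hpν.ne']
        field_simp

lemma integrableOn_exp_neg_mul_mittagLeffler (hν : 0 < ν) (hp : 0 < p) (hz : |z| < p ^ ν) :
    IntegrableOn (fun t => exp (-(p * t)) * mittagLeffler ν (z * t ^ ν)) (Ioi 0) := by
  have hdom : IntegrableOn (fun t => exp (-(p * t)) * mittagLeffler ν (|z| * t ^ ν)) (Ioi 0) := by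
    refine .of_integral_ne_zero ?_
    rw [integral_exp_neg_mul_mittagLeffler hν.le hp (by rwa [abs_abs])]
    exact (div_pos (rpow_pos_of_pos hp _) (sub_pos.mpr hz)).ne'
  have hcont := (continuous_mittagLeffler hν).comp
    (continuous_const.mul (continuous_rpow_const hν.le) : Continuous fun t => z * t ^ ν)
  refine hdom.mono' (Continuous.aestronglyMeasurable (by fun_prop)) ?_
  filter_upwards [ae_restrict_mem measurableSet_Ioi] with t ht
  rw [norm_mul, norm_of_nonneg (exp_nonneg _), norm_eq_abs]
  refine mul_le_mul_of_nonneg_left ?_ (exp_nonneg _)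
  simpa [abs_mul, abs_of_pos (rpow_pos_of_pos ht ν)] using abs_mittagLeffler_le hν (z * t ^ ν)

end MittagLeffler

section LaplaceMgf

variable {Ω : Type*} {m : MeasurableSpace Ω} {μ : Measure Ω} [IsFiniteMeasure μ] {X : Ω → ℝ}
  {p : ℝ}

lemma Ici_zero_subset_integrableExpSet (hX : AEMeasurable X μ) (hX0 : X ≤ᵐ[μ] 0) :
    Ici 0 ⊆ integrableExpSet X μ :=
  fun t ht => integrable_exp_mul_of_le t 0 ht hX hX0

lemma completelyMonotone_mgf_of_isFiniteMeasure (hX : AEMeasurable X μ) (hX0 : X ≤ᵐ[μ] 0) :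
    CompletelyMonotone (mgf X μ) :=
  completelyMonotone_mgf hX0
    (Ioi_subset_Ici_self.trans (Ici_zero_subset_integrableExpSet hX hX0))

lemma integrable_prod_exp_neg_mul_exp (hX : AEMeasurable X μ) (hX0 : X ≤ᵐ[μ] 0) (hp : 0 < p) :
    Integrable (fun z : ℝ × Ω => exp (-(p * z.1)) * exp (z.1 * X z.2))
      ((volume.restrict (Ioi 0)).prod μ) := by
  have hexp : IntegrableOn (fun t => exp (-(p * t))) (Ioi 0) := by
    simpa only [neg_mul] using integrableOn_exp_mul_Ioi (neg_lt_zero.mpr hp) 0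
  have hXsnd : AEMeasurable (fun z : ℝ × Ω => X z.2) ((volume.restrict (Ioi 0)).prod μ) :=
    hX.comp_quasiMeasurePreserving Measure.quasiMeasurePreserving_snd
  refine (hexp.integrable.mul_prod (integrable_const (1 : ℝ))).mono' (by fun_prop) ?_
  filter_upwards [Measure.quasiMeasurePreserving_fst.ae (ae_restrict_mem measurableSet_Ioi),
    Measure.quasiMeasurePreserving_snd.ae hX0] with z ht hz
  rw [norm_mul, norm_of_nonneg (exp_nonneg _), norm_of_nonneg (exp_nonneg _)]
  gcongr
  exact exp_le_one_iff.mpr (mul_nonpos_of_nonneg_of_nonpos (le_of_lt ht) hz)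

lemma integrableOn_exp_neg_mul_mgf (hX : AEMeasurable X μ) (hX0 : X ≤ᵐ[μ] 0) (hp : 0 < p) :
    IntegrableOn (fun t => exp (-(p * t)) * mgf X μ t) (Ioi 0) := by
  simpa only [mgf, integral_const_mul, IntegrableOn] using
    (integrable_prod_exp_neg_mul_exp hX hX0 hp).integral_prod_left

theorem integral_exp_neg_mul_mgf (hX : AEMeasurable X μ) (hX0 : X ≤ᵐ[μ] 0) (hp : 0 < p) :
    ∫ t in Ioi 0, exp (-(p * t)) * mgf X μ t = ∫ x, (p - X x)⁻¹ ∂μ := by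
  calc ∫ t in Ioi 0, exp (-(p * t)) * mgf X μ t
      = ∫ t in Ioi 0, ∫ x, exp (-(p * t)) * exp (t * X x) ∂μ := by
        simp only [mgf, integral_const_mul]
    _ = ∫ x, (∫ t in Ioi 0, exp (-(p * t)) * exp (t * X x)) ∂μ :=
        integral_integral_swap (integrable_prod_exp_neg_mul_exp hX hX0 hp)
    _ = ∫ x, (p - X x)⁻¹ ∂μ := by
        refine integral_congr_ae (hX0.mono fun x hx => ?_)
        have hpX : X x - p < 0 := by linarith [show X x ≤ 0 from hx]
        calc ∫ t in Ioi 0, exp (-(p * t)) * exp (t * X x)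
            = ∫ t in Ioi 0, exp ((X x - p) * t) := by
              congr with t
              rw [← exp_add]
              ring_nf
          _ = (p - X x)⁻¹ := by
              rw [integral_exp_mul_Ioi hpX, mul_zero, exp_zero, neg_div, ← div_neg, neg_sub,
                one_div]

end LaplaceMgf

section Strip

lemma tendsto_integral_vertical_segment {E : Type*} [NormedAddCommGroup E] [NormedSpace ℝ E]
    [CompleteSpace E] {a b : ℝ} (hab : a ≤ b) {g : ℂ → E} {c : E} {l : Filter ℝ}
    [l.IsCountablyGenerated]
    (hg : ContinuousOn g (Complex.im ⁻¹' Icc a b))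
    (hlim : Tendsto g (comap Complex.re l ⊓ 𝓟 (Complex.im ⁻¹' Icc a b)) (𝓝 c)) :
    Tendsto (fun x : ℝ => ∫ y in a..b, g (x + y * Complex.I)) l (𝓝 ((b - a) • c)) := by
  have hmem {x y : ℝ} (hy : y ∈ uIoc a b) : (x + y * Complex.I : ℂ) ∈ Complex.im ⁻¹' Icc a b := by
    simpa using Ioc_subset_Icc_self (uIoc_of_le hab ▸ hy)
  have hbound : ∀ᶠ x : ℝ in l, ∀ y ∈ uIoc a b, ‖g (x + y * Complex.I)‖ ≤ ‖c‖ + 1 := by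
    have := hlim.norm.eventually_le_const (lt_add_one ‖c‖)
    rw [eventually_inf_principal, eventually_comap] at this
    exact this.mono fun x hx y hy => hx _ (by simp) (hmem hy)
  rw [← intervalIntegral.integral_const]
  refine intervalIntegral.tendsto_integral_filter_of_dominated_convergence (fun _ => ‖c‖ + 1)
    (.of_forall fun x => ?_) (hbound.mono fun x hx => .of_forall hx) intervalIntegrable_const
    (.of_forall fun y hy => hlim.comp ?_)
  · exact (hg.comp (by fun_prop) fun y hy => hmem hy).aestronglyMeasurable measurableSet_uIoc
  · exact tendsto_inf.mpr ⟨tendsto_comap_iff.mpr (tendsto_id.congr fun x => by simp),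
      tendsto_principal.mpr (.of_forall fun x => hmem hy)⟩

/-- The closed horizontal strip `|Im w| ≤ π`; `exp` maps its interior biholomorphically onto the
plane cut along `(-∞, 0]`, and its two boundary lines onto the two sides of the cut. -/
def closedStrip : Set ℂ := Complex.im ⁻¹' Icc (-π) π

lemma exp_ne_exp_of_mem_closedStrip {a w : ℂ} (ha : |a.im| < π) (hw : w ∈ closedStrip)
    (hwa : w ≠ a) : Complex.exp w ≠ Complex.exp a := by
  rw [Ne, Complex.exp_eq_exp_iff_exists_int]
  rintro ⟨n, hn⟩
  have him : w.im = a.im + n * (2 * π) := by simpa using congr_arg Complex.im hn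
  have habs : |(n : ℝ)| < 1 := by
    obtain ⟨hw₁, hw₂⟩ : -π ≤ w.im ∧ w.im ≤ π := hw
    obtain ⟨ha₁, ha₂⟩ := abs_lt.mp ha
    have hpi := pi_pos
    exact abs_lt.mpr ⟨by nlinarith, by nlinarith⟩
  have hn0 : n = 0 := Int.abs_lt_one_iff.mp (mod_cast habs)
  exact hwa (by simpa [hn0] using hn)

lemma closedStrip_mem_nhds {a : ℂ} (ha : |a.im| < π) : closedStrip ∈ 𝓝 a :=
  Complex.continuous_im.continuousAt.preimage_mem_nhds
    (Icc_mem_nhds (abs_lt.mp ha).1 (abs_lt.mp ha).2)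

variable {f : ℂ → ℂ} {a l : ℂ}

/-- The quotient `(f w - f a) / (exp w - exp a)`, with its removable singularity at `a` filled in;
it has no other singularity in the strip, so Cauchy's theorem applies to it. -/
noncomputable def expSlope (f : ℂ → ℂ) (a w : ℂ) : ℂ :=
  dslope f a w / dslope Complex.exp a w

lemma expSlope_of_ne {w : ℂ} (hwa : w ≠ a) :
    expSlope f a w = (f w - f a) * (Complex.exp w - Complex.exp a)⁻¹ := by
  rw [expSlope, dslope_of_ne _ hwa, dslope_of_ne _ hwa, slope_def_field, slope_def_field,
    div_div_div_cancel_right₀ (sub_ne_zero.mpr hwa), div_eq_mul_inv]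

lemma differentiableOn_expSlope (hf : DifferentiableOn ℂ f closedStrip) (ha : |a.im| < π) :
    DifferentiableOn ℂ (expSlope f a) closedStrip := by
  have hnhds := closedStrip_mem_nhds ha
  refine ((Complex.differentiableOn_dslope hnhds).mpr hf).div
    ((Complex.differentiableOn_dslope hnhds).mpr Complex.differentiable_exp.differentiableOn)
    fun w hw => ?_
  obtain rfl | hwa := eq_or_ne w a
  · simp [Complex.exp_ne_zero]
  · rw [dslope_of_ne _ hwa, slope_def_field]
    exact div_ne_zero (sub_ne_zero.mpr (exp_ne_exp_of_mem_closedStrip ha hw hwa))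
      (sub_ne_zero.mpr hwa)

lemma tendsto_expSlope_atBot
    (hl : Tendsto f (comap Complex.re atBot ⊓ 𝓟 closedStrip) (𝓝 l)) :
    Tendsto (expSlope f a) (comap Complex.re atBot ⊓ 𝓟 closedStrip)
      (𝓝 ((l - f a) * (0 - Complex.exp a)⁻¹)) := by
  refine ((hl.sub_const (f a)).mul (((Complex.tendsto_exp_comap_re_atBot.mono_left
    inf_le_left).sub_const _).inv₀ (by simp [Complex.exp_ne_zero]))).congr' ?_
  have hne : ∀ᶠ w in comap Complex.re atBot, w.re < a.re := (eventually_lt_atBot a.re).comap _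
  filter_upwards [hne.filter_mono inf_le_left] with w hw
  exact (expSlope_of_ne fun h => hw.ne (congr_arg _ h)).symm

lemma tendsto_expSlope_atTop
    (hl : Tendsto f (comap Complex.re atTop ⊓ 𝓟 closedStrip) (𝓝 l)) :
    Tendsto (expSlope f a) (comap Complex.re atTop ⊓ 𝓟 closedStrip) (𝓝 0) := by
  have hexp : Tendsto (fun w => (Complex.exp w - Complex.exp a)⁻¹)
      (comap Complex.re atTop ⊓ 𝓟 closedStrip) (𝓝 0) := by
    refine tendsto_inv₀_cobounded.comp ?_
    simpa only [Function.comp_def, neg_add_eq_sub] using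
      (tendsto_const_add_cobounded (-Complex.exp a)).comp
        (Complex.tendsto_exp_comap_re_atTop.mono_left inf_le_left)
  rw [← mul_zero (l - f a)]
  refine ((hl.sub_const (f a)).mul hexp).congr' ?_
  have hne : ∀ᶠ w in comap Complex.re atTop, a.re < w.re := (eventually_gt_atTop a.re).comap _
  filter_upwards [hne.filter_mono inf_le_left] with w hw
  exact (expSlope_of_ne fun h => hw.ne' (congr_arg _ h)).symm

lemma expSlope_jump (ha : |a.im| < π) (x : ℝ) :
    expSlope f a (x - π * Complex.I) - expSlope f a (x + π * Complex.I) =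
      (f (x + π * Complex.I) - f (x - π * Complex.I)) / (Complex.exp x + Complex.exp a) := by
  have hne_sub : (x - π * Complex.I : ℂ) ≠ a := by
    rintro rfl
    simp [abs_of_pos pi_pos] at ha
  have hne_add : (x + π * Complex.I : ℂ) ≠ a := by
    rintro rfl
    simp [abs_of_pos pi_pos] at ha
  rw [expSlope_of_ne hne_sub, expSlope_of_ne hne_add, Complex.exp_sub_pi_mul_I,
    Complex.exp_add_pi_mul_I, ← neg_add', inv_neg]
  ring

lemma integral_expSlope_jump (hf : DifferentiableOn ℂ f closedStrip) (ha : |a.im| < π) (R : ℝ) :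
    ∫ x in -R..R, (expSlope f a (x - π * Complex.I) - expSlope f a (x + π * Complex.I)) =
      Complex.I * ((∫ y in -π..π, expSlope f a ((-R : ℝ) + y * Complex.I)) -
        ∫ y in -π..π, expSlope f a (R + y * Complex.I)) := by
  have hdiff := differentiableOn_expSlope hf ha
  have hint {c : ℝ} (hc : c ∈ Icc (-π) π) :
      IntervalIntegrable (fun x : ℝ => expSlope f a (x + c * Complex.I)) volume (-R) R :=
    (hdiff.continuousOn.comp_continuous (by fun_prop) fun x => by
      simpa [closedStrip] using hc).intervalIntegrable _ _
  have hpi : -π ≤ π := by linarith [pi_pos]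
  have hcauchy := Complex.integral_boundary_rect_eq_zero_of_differentiableOn (expSlope f a)
    ⟨-R, -π⟩ ⟨R, π⟩ (hdiff.mono fun w hw => (uIcc_of_le hpi).subset hw.2)
  have hlower := hint (left_mem_Icc.mpr hpi)
  simp only [Complex.ofReal_neg, neg_mul, ← sub_eq_add_neg, smul_eq_mul] at hcauchy hlower ⊢
  rw [intervalIntegral.integral_sub hlower (hint (right_mem_Icc.mpr hpi))]
  linear_combination hcauchy

theorem tendsto_integral_jump_div_exp_add_exp {r : ℂ} (hf : DifferentiableOn ℂ f closedStrip)
    (hl : Tendsto f (comap Complex.re atBot ⊓ 𝓟 closedStrip) (𝓝 l))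
    (hr : Tendsto f (comap Complex.re atTop ⊓ 𝓟 closedStrip) (𝓝 r)) (ha : |a.im| < π) :
    Tendsto (fun R : ℝ => ∫ x in -R..R,
        (f (x + π * Complex.I) - f (x - π * Complex.I)) / (Complex.exp x + Complex.exp a))
      atTop (𝓝 (2 * π * Complex.I * ((f a - l) / Complex.exp a))) := by
  have hpi : -π ≤ π := by linarith [pi_pos]
  have hcont := (differentiableOn_expSlope hf ha).continuousOn
  have hleft := (tendsto_integral_vertical_segment hpi hcont (tendsto_expSlope_atBot hl)).comp
    tendsto_neg_atTop_atBot
  have hright := tendsto_integral_vertical_segment hpi hcont (tendsto_expSlope_atTop hr)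
  have hlimit : Complex.I * ((π - -π) • ((l - f a) * (0 - Complex.exp a)⁻¹) - (π - -π) • 0) =
      2 * π * Complex.I * ((f a - l) / Complex.exp a) := by
    rw [smul_zero, sub_zero, Complex.real_smul, zero_sub, inv_neg]
    push_cast
    ring
  simp only [← expSlope_jump ha, integral_expSlope_jump hf ha, ← hlimit]
  exact (hleft.sub hright).const_mul Complex.I

end Strip

section SpectralMeasure

lemma one_add_sq_div_two_le_cosh (y : ℝ) : 1 + y ^ 2 / 2 ≤ cosh y := by
  have hcosh : cosh y = 1 + 2 * sinh (y / 2) ^ 2 := by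
    rw [← mul_div_cancel₀ y two_ne_zero, cosh_two_mul, cosh_sq]
    ring_nf
  have hsinh : |y / 2| ≤ |sinh (y / 2)| := by
    rw [abs_sinh]
    exact self_le_sinh_iff.mpr (abs_nonneg _)
  linarith [sq_le_sq.mpr hsinh]

lemma cosh_add_pos {c : ℝ} (hc : -1 < c) (y : ℝ) : 0 < cosh y + c := by
  linarith [one_le_cosh y]

lemma integrable_inv_cosh_add {c : ℝ} (hc : -1 < c) : Integrable fun y => (cosh y + c)⁻¹ := by
  set δ := min (1 + c) (1 / 2)
  have hδ : 0 < δ := lt_min (by linarith) (by norm_num)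
  have hbound (y : ℝ) : δ * (1 + y ^ 2) ≤ cosh y + c := by
    nlinarith [one_add_sq_div_two_le_cosh y, min_le_left (1 + c) (1 / 2),
      min_le_right (1 + c) (1 / 2), sq_nonneg y]
  refine (integrable_inv_one_add_sq.const_mul δ⁻¹).mono'
    (Continuous.aestronglyMeasurable (continuous_cosh.add_const c |>.inv₀
      fun y => (cosh_add_pos hc y).ne')) (.of_forall fun y => ?_)
  rw [norm_inv, norm_of_nonneg (cosh_add_pos hc y).le, ← mul_inv]
  exact inv_anti₀ (by positivity) (hbound y)

/-- The complex logistic function, which is `u ↦ u / (1 + u)` in the coordinate `u = exp z`. -/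
noncomputable def logistic (z : ℂ) : ℂ := (1 + Complex.exp (-z))⁻¹

lemma one_add_exp_neg_ne_zero {z : ℂ} (hz : |z.im| < π) : 1 + Complex.exp (-z) ≠ 0 := by
  have hmem : (π * Complex.I : ℂ) ∈ closedStrip := by simp [closedStrip, pi_pos.le]
  have hne : (π * Complex.I : ℂ) ≠ -z := fun h => by
    have him : π = -z.im := by simpa using congr_arg Complex.im h
    exact (neg_lt_of_abs_lt hz).ne (by linarith)
  have hexp := exp_ne_exp_of_mem_closedStrip (a := -z) (by simpa using hz) hmem hne
  rw [Complex.exp_pi_mul_I] at hexp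
  exact fun h => hexp (by linear_combination -h)

lemma differentiableAt_logistic {z : ℂ} (hz : |z.im| < π) : DifferentiableAt ℂ logistic z :=
  (by fun_prop : DifferentiableAt ℂ (fun z => 1 + Complex.exp (-z)) z).inv
    (one_add_exp_neg_ne_zero hz)

lemma tendsto_logistic_atBot : Tendsto logistic (comap Complex.re atBot) (𝓝 0) := by
  have hneg : Tendsto (fun z : ℂ => -z) (comap Complex.re atBot) (comap Complex.re atTop) :=
    tendsto_comap_iff.mpr (tendsto_neg_atBot_atTop.comp tendsto_comap)
  exact tendsto_inv₀_cobounded.comp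
    ((tendsto_const_add_cobounded 1).comp (Complex.tendsto_exp_comap_re_atTop.comp hneg))

lemma tendsto_logistic_atTop : Tendsto logistic (comap Complex.re atTop) (𝓝 1) := by
  have hneg : Tendsto (fun z : ℂ => -z) (comap Complex.re atTop) (comap Complex.re atBot) :=
    tendsto_comap_iff.mpr (tendsto_neg_atTop_atBot.comp tendsto_comap)
  have hden : Tendsto (fun z => 1 + Complex.exp (-z)) (comap Complex.re atTop) (𝓝 1) := by
    simpa using (Complex.tendsto_exp_comap_re_atBot.comp hneg).const_add 1
  rw [← inv_one]
  exact hden.inv₀ one_ne_zero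

lemma logistic_log {p : ℝ} (hp : 0 < p) (ν : ℝ) :
    logistic (ν * log p) = ((1 + (p ^ ν)⁻¹)⁻¹ : ℝ) := by
  rw [logistic, rpow_def_of_pos hp, ← exp_neg]
  push_cast
  ring_nf

lemma logistic_jump (x : ℝ) {θ : ℝ} (hθ : |θ| < π) :
    logistic (x + θ * Complex.I) - logistic (x - θ * Complex.I) =
      Complex.I * ((sin θ / (cosh x + cos θ) : ℝ) : ℂ) := by
  have hadd := one_add_exp_neg_ne_zero (z := x + θ * Complex.I) (by simpa using hθ)
  have hsub := one_add_exp_neg_ne_zero (z := x - θ * Complex.I) (by simpa using hθ)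
  have hexp_add : Complex.exp (-(x + θ * Complex.I)) =
      Complex.exp (-x) * (Complex.cos θ - Complex.sin θ * Complex.I) := by
    rw [Complex.cos_sub_sin_I, ← Complex.exp_add]
    ring_nf
  have hexp_sub : Complex.exp (-(x - θ * Complex.I)) =
      Complex.exp (-x) * (Complex.cos θ + Complex.sin θ * Complex.I) := by
    rw [← Complex.exp_mul_I, ← Complex.exp_add]
    ring_nf
  have hprod : (1 + Complex.exp (-(x + θ * Complex.I))) * (1 + Complex.exp (-(x - θ * Complex.I))) =
      2 * Complex.exp (-x) * (Complex.cosh x + Complex.cos θ) := by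
    have hinv : Complex.exp (-x) * Complex.exp x = 1 := by simp [← Complex.exp_add]
    rw [hexp_add, hexp_sub, Complex.cosh]
    linear_combination Complex.exp (-x) ^ 2 * Complex.sin_sq_add_cos_sq θ -
      Complex.exp (-x) ^ 2 * Complex.sin θ ^ 2 * Complex.I_sq - hinv
  have hden : Complex.cosh x + Complex.cos θ ≠ 0 := by
    intro h
    rw [h, mul_zero] at hprod
    exact mul_ne_zero hadd hsub hprod
  rw [logistic, logistic, inv_sub_inv hadd hsub, hprod, hexp_add, hexp_sub]
  push_cast
  have hne := Complex.exp_ne_zero (-x)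
  field_simp
  ring

/-- The spectral density of `t ↦ E_ν(-t ^ ν)` in the logarithmic coordinate `r = exp x`; in the
coordinate `r` it is the familiar `(sin πν / π) r^(ν-1) / (r^(2ν) + 2 r^ν cos πν + 1)`. -/
noncomputable def spectralDensity (ν x : ℝ) : ℝ :=
  sin (π * ν) / (2 * π) * (cosh (ν * x) + cos (π * ν))⁻¹

/-- The measure with density `spectralDensity ν`. -/
noncomputable def spectralMeasure (ν : ℝ) : Measure ℝ :=
  volume.withDensity fun x => ENNReal.ofReal (spectralDensity ν x)

variable {ν : ℝ}

lemma neg_one_lt_cos_pi_mul (hν : ν ∈ Ioo 0 1) : -1 < cos (π * ν) := by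
  rw [← cos_pi]
  exact cos_lt_cos_of_nonneg_of_le_pi (by have := hν.1; positivity) le_rfl
    (mul_lt_of_lt_one_right pi_pos hν.2)

lemma spectralDensity_nonneg (hν : ν ∈ Ioo 0 1) (x : ℝ) : 0 ≤ spectralDensity ν x := by
  have hsin : 0 ≤ sin (π * ν) := sin_nonneg_of_nonneg_of_le_pi
    (mul_nonneg pi_pos.le hν.1.le) (mul_le_of_le_one_right pi_pos.le hν.2.le)
  have hcosh := cosh_add_pos (neg_one_lt_cos_pi_mul hν) (ν * x)
  rw [spectralDensity]
  positivity

lemma integrable_spectralDensity (hν : ν ∈ Ioo 0 1) : Integrable (spectralDensity ν) :=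
  ((integrable_inv_cosh_add (neg_one_lt_cos_pi_mul hν)).comp_mul_left' hν.1.ne').const_mul _

lemma isFiniteMeasure_spectralMeasure (hν : ν ∈ Ioo 0 1) : IsFiniteMeasure (spectralMeasure ν) :=
  isFiniteMeasure_withDensity_ofReal (integrable_spectralDensity hν).hasFiniteIntegral

lemma continuous_spectralDensity (hν : ν ∈ Ioo 0 1) : Continuous (spectralDensity ν) := by
  refine continuous_const.mul (Continuous.inv₀ (by fun_prop) fun x => ?_)
  exact (cosh_add_pos (neg_one_lt_cos_pi_mul hν) _).ne'

lemma integral_spectralMeasure (hν : ν ∈ Ioo 0 1) (g : ℝ → ℝ) :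
    ∫ x, g x ∂spectralMeasure ν = ∫ x, spectralDensity ν x * g x := by
  rw [spectralMeasure, integral_withDensity_eq_integral_toReal_smul
    (continuous_spectralDensity hν).measurable.ennreal_ofReal
    (.of_forall fun _ => ENNReal.ofReal_lt_top)]
  simp only [ENNReal.toReal_ofReal (spectralDensity_nonneg hν _), smul_eq_mul]

end SpectralMeasure

section Stieltjes

variable {ν p : ℝ}

lemma integrable_spectralDensity_div_exp_add (hν : ν ∈ Ioo 0 1) (hp : 0 < p) :
    Integrable fun x => spectralDensity ν x / (exp x + p) := by
  refine ((integrable_spectralDensity hν).mul_const p⁻¹).mono'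
    (((continuous_spectralDensity hν).div (by fun_prop) fun x => by positivity)
      |>.aestronglyMeasurable) (.of_forall fun x => ?_)
  rw [norm_div, norm_of_nonneg (spectralDensity_nonneg hν x),
    norm_of_nonneg (by positivity), div_eq_mul_inv]
  exact mul_le_mul_of_nonneg_left (inv_anti₀ hp (by linarith [exp_pos x]))
    (spectralDensity_nonneg hν x)

lemma logistic_jump_eq_spectralDensity (hν : ν ∈ Ioo 0 1) (x : ℝ) :
    logistic (ν * (x + π * Complex.I)) - logistic (ν * (x - π * Complex.I)) =
      2 * π * Complex.I * spectralDensity ν x := by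
  have hθ : |π * ν| < π := by
    rw [abs_of_pos (mul_pos pi_pos hν.1)]
    exact mul_lt_of_lt_one_right pi_pos hν.2
  have hjump := logistic_jump (ν * x) hθ
  push_cast at hjump
  rw [mul_add, mul_sub, ← mul_assoc, mul_comm (ν : ℂ) π, hjump, spectralDensity]
  have hpi : (π : ℂ) ≠ 0 := mod_cast pi_ne_zero
  push_cast
  field_simp

lemma differentiableOn_logistic_mul (hν : ν ∈ Ioo 0 1) :
    DifferentiableOn ℂ (fun w => logistic (ν * w)) closedStrip := fun w hw => by
  have him : |(ν * w : ℂ).im| < π := by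
    rw [Complex.im_ofReal_mul, abs_mul, abs_of_pos hν.1]
    nlinarith [hν.1, hν.2, pi_pos, abs_le.mpr (mem_Icc.mp hw)]
  exact ((differentiableAt_logistic him).comp w (by fun_prop)).differentiableWithinAt

lemma tendsto_mul_comap_re {l : Filter ℝ} (hl : Tendsto (ν * ·) l l) :
    Tendsto (fun w : ℂ => ν * w) (comap Complex.re l) (comap Complex.re l) := by
  simpa only [tendsto_comap_iff, Function.comp_def, Complex.re_ofReal_mul] using
    hl.comp tendsto_comap

lemma integral_spectralDensity_div_exp_add (hν : ν ∈ Ioo 0 1) (hp : 0 < p) :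
    ∫ x, spectralDensity ν x / (exp x + p) = p⁻¹ * (1 + (p ^ ν)⁻¹)⁻¹ := by
  have hl := (tendsto_logistic_atBot.comp
    (tendsto_mul_comap_re (tendsto_id.const_mul_atBot hν.1))).mono_left
      (inf_le_left (b := 𝓟 closedStrip))
  have hr := (tendsto_logistic_atTop.comp
    (tendsto_mul_comap_re (tendsto_id.const_mul_atTop hν.1))).mono_left
      (inf_le_left (b := 𝓟 closedStrip))
  have hjump := tendsto_integral_jump_div_exp_add_exp (differentiableOn_logistic_mul hν) hl hr
    (a := log p) (by simpa using pi_pos)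
  have htwo_pi_I : 2 * π * Complex.I ≠ 0 := Complex.two_pi_I_ne_zero
  have hexp_log : Complex.exp (log p) = p := by rw [← Complex.ofReal_exp, exp_log hp]
  have hintegrand (x : ℝ) : 2 * π * Complex.I * spectralDensity ν x / (Complex.exp x + p) =
      2 * π * Complex.I * ((spectralDensity ν x / (exp x + p) : ℝ) : ℂ) := by
    push_cast
    ring
  simp only [logistic_jump_eq_spectralDensity hν, logistic_log hp, hexp_log, hintegrand,
    intervalIntegral.integral_const_mul, intervalIntegral.integral_ofReal, sub_zero] at hjump
  have hlimit := hjump.const_mul (2 * π * Complex.I)⁻¹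
  simp only [inv_mul_cancel_left₀ htwo_pi_I, ← Complex.ofReal_div] at hlimit
  rw [← div_eq_inv_mul]
  have hlimit_real := (Complex.continuous_re.tendsto _).comp hlimit
  exact tendsto_nhds_unique (intervalIntegral_tendsto_integral
    (integrable_spectralDensity_div_exp_add hν hp) tendsto_neg_atTop_atBot tendsto_id) hlimit_real

lemma integral_inv_add_exp_spectralMeasure (hν : ν ∈ Ioo 0 1) (hp : 0 < p) :
    ∫ x, (p + exp x)⁻¹ ∂spectralMeasure ν = p ^ (ν - 1) / (p ^ ν + 1) := by
  have hpν := rpow_pos_of_pos hp ν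
  simp only [integral_spectralMeasure hν, ← div_eq_mul_inv, add_comm p,
    integral_spectralDensity_div_exp_add hν hp, rpow_sub_one hp.ne']
  field_simp

end Stieltjes

section CompleteMonotonicity

variable {ν : ℝ}

lemma neg_exp_ae_nonpos (μ : Measure ℝ) : (fun x => -exp x) ≤ᵐ[μ] 0 :=
  .of_forall fun x => neg_nonpos.mpr (exp_pos x).le

theorem eqOn_mittagLeffler_neg_rpow_mgf (hν : ν ∈ Ioo 0 1) :
    EqOn (fun t => mittagLeffler ν (-t ^ ν)) (mgf (fun x => -exp x) (spectralMeasure ν))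
      (Ioi 0) := by
  have := isFiniteMeasure_spectralMeasure hν
  have hX : AEMeasurable (fun x => -exp x) (spectralMeasure ν) := by fun_prop
  have hX0 := neg_exp_ae_nonpos (spectralMeasure ν)
  have hlt (p : ℝ) (hp : 1 < p) : |(-1 : ℝ)| < p ^ ν := by
    simpa using one_lt_rpow hp hν.1
  refine eqOn_Ioi_of_integral_exp_neg_smul_eq (c := 1)
    ((continuous_mittagLeffler hν.1).comp_continuousOn
      (continuous_rpow_const hν.1.le).neg.continuousOn)
    (completelyMonotone_mgf_of_isFiniteMeasure hX hX0).1.continuousOn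
    (fun p hp => ?_) (fun p hp => ?_) (fun p hp => ?_)
  · simpa using integrableOn_exp_neg_mul_mittagLeffler hν.1 (one_pos.trans hp) (hlt p hp)
  · exact integrableOn_exp_neg_mul_mgf hX hX0 (one_pos.trans hp)
  · have hp0 : 0 < p := one_pos.trans hp
    have hML := integral_exp_neg_mul_mittagLeffler hν.1.le hp0 (hlt p hp)
    simp only [neg_one_mul, sub_neg_eq_add] at hML
    simp only [smul_eq_mul, hML, integral_exp_neg_mul_mgf hX hX0 hp0, sub_neg_eq_add,
      integral_inv_add_exp_spectralMeasure hν hp0]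

theorem completelyMonotone_mittagLeffler_neg_rpow (hν : ν ∈ Ioo 0 1) :
    CompletelyMonotone fun t => mittagLeffler ν (-t ^ ν) := by
  have := isFiniteMeasure_spectralMeasure hν
  exact (completelyMonotone_mgf_of_isFiniteMeasure (by fun_prop) (neg_exp_ae_nonpos _)).congr
    (eqOn_mittagLeffler_neg_rpow_mgf hν)

end CompleteMonotonicity

/-- For `ν ∈ (0,1)`, the relaxation response
`σ(t) = E_ν(−(log(1+t))^ν)` is completely monotone on `(0,∞)`. -/
theorem relaxation_response_completely_monotone (ν : ℝ) (hν : ν ∈ Set.Ioo (0:ℝ) 1) :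
    ContDiffOn ℝ (⊤ : ℕ∞) (fun t : ℝ => mittagLeffler ν (-(Real.log (1 + t)) ^ ν))
      (Set.Ioi 0) ∧
    ∀ n : ℕ, ∀ t : ℝ, 0 < t →
      0 ≤ (-1 : ℝ) ^ n *
        iteratedDeriv n (fun t : ℝ => mittagLeffler ν (-(Real.log (1 + t)) ^ ν)) t := by
  have hlog_smooth : ContDiffOn ℝ ∞ (fun t => log (1 + t)) (Ioi 0) :=
    (contDiffOn_const.add contDiffOn_fun_id).log fun t ht =>
      (add_pos one_pos (mem_Ioi.mp ht)).ne'
  have hlog_pos : MapsTo (fun t => log (1 + t)) (Ioi 0) (Ioi 0) := fun t ht =>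
    log_pos (by linarith [mem_Ioi.mp ht])
  exact (completelyMonotone_mittagLeffler_neg_rpow hν).comp hlog_smooth hlog_pos
    (completelyMonotone_deriv_log_const_add zero_le_one)
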